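/- arXiv:1406.2440 — 2 statements merged into one kernel-verified Lean document; each statement's English description precedes it below -/
import Mathlib

section
/- There is an explicit constant (Δ₀ = 1000 suffices) such that for every finite simple graph G whose maximum degree Δ satisfies Δ ≥ 1000 and which has no isolated vertices, the induced matching number satisfies ν_s(G) ≥ n(G) / ((⌈Δ/2⌉ + 1) · (⌊Δ/2⌋ + 1)). -/
/-- A finset `M` of edges is an *induced matching* of `G` if every element of `M` is an
edge of `G`, no two distinct edges of `M` share an endvertex, and no edge of `G` joins
an endvertex of one edge of `M` to an endvertex of another edge of `M`. -/
def IsInducedMatching {V : Type*} (G : SimpleGraph V) (M : Finset (Sym2 V)) : Prop :=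
  (M : Set (Sym2 V)) ⊆ G.edgeSet ∧
    ∀ e ∈ M, ∀ f ∈ M, e ≠ f → ∀ x ∈ e, ∀ y ∈ f, x ≠ y ∧ ¬ G.Adj x y

/-- The induced (strong) matching number `ν_s(G)`: the maximum size of an induced matching. -/
noncomputable def indMatchNum {V : Type*} (G : SimpleGraph V) : ℕ :=
  sSup {n : ℕ | ∃ M : Finset (Sym2 V), IsInducedMatching G M ∧ M.card = n}

/-!
Let every vertex spread a unit of weight evenly over its edges, except that a vertex with pendant
neighbours (a *hub*) uses only the edges to these. An induced matching is an independent set of the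
graph on the edges of `G` in which two edges conflict if they are equal, share a vertex or are
joined by an edge, so by Motzkin–Straus `n(G)² ≤ ν_s(G) * ∑ w e * w f`, the sum running over the
pairs of conflicting edges. Conflicts can be witnessed at vertices that are not pendant, which
bounds this sum by that of `load x * load y` over the equal or adjacent non-pendant `x` and `y`,
where `load x` is the total weight of the edges at `x`. Charging each such product to `x` and `y`
according to their kinds (hub, heavy or light), every vertex can pay from its share of `n(G)`. The
tight case is a hub with `l` pendant neighbours and only hubs otherwise: it has load `1 + l`, a
share `1 + l`, and a charge of at most `(1 + l)² * (Δ + 1 - l)`, and `(1 + l) * (Δ + 1 - l)` is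
at most `(⌈Δ/2⌉ + 1) * (⌊Δ/2⌋ + 1)`.
-/

open Finset

theorem IsInducedMatching.card_le_indMatchNum {V : Type*} [Finite V] {G : SimpleGraph V}
    {M : Finset (Sym2 V)} (hM : IsInducedMatching G M) : #M ≤ indMatchNum G := by
  have := Fintype.ofFinite (Sym2 V)
  refine le_csSup ⟨Fintype.card (Sym2 V), ?_⟩ ⟨M, hM, rfl⟩
  rintro _ ⟨M', -, rfl⟩
  exact M'.card_le_univ

namespace InducedMatching

section MotzkinStraus

variable {ι K : Type*} [CommRing K] [LinearOrder K] [IsStrictOrderedRing K]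

theorem add_sq_le_add_one_mul_of_sq_le_mul {a b c q : K} (hc : 0 ≤ c) (hq : 0 ≤ q)
    (h : b ^ 2 ≤ c * q) : (a + b) ^ 2 ≤ (c + 1) * (a ^ 2 + q) := by
  have hcross : 2 * (a * b) ≤ q + c * a ^ 2 := by
    refine le_of_sq_le_sq ?_ (by positivity)
    calc (2 * (a * b)) ^ 2 = 4 * a ^ 2 * b ^ 2 := by ring
      _ ≤ 4 * a ^ 2 * (c * q) := by gcongr
      _ ≤ (q + c * a ^ 2) ^ 2 := by linarith [sq_nonneg (q - c * a ^ 2)]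
  linarith

theorem sq_sum_add_sum_mul_le_of_forall_le {r : ι → ι → Prop} [DecidableRel r] {w : ι → K}
    {s : Finset ι} (hw : ∀ i ∈ s, 0 ≤ w i) {i : ι}
    (hmin : ∀ j ∈ s, ∑ k ∈ s with r i k, w k ≤ ∑ k ∈ s with r j k, w k) :
    (∑ j ∈ s with r i j, w j) ^ 2 +
        ∑ j ∈ s with ¬ r i j, ∑ k ∈ s with ¬ r i k ∧ r j k, w j * w k ≤
      ∑ j ∈ s, ∑ k ∈ s with r j k, w j * w k := by
  rw [← sum_filter_add_sum_filter_not s (r i), sq, sum_mul]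
  gcongr ?_ + ?_
  · refine sum_le_sum fun j hj ↦ ?_
    have hj := mem_of_mem_filter j hj
    rw [← mul_sum]
    exact mul_le_mul_of_nonneg_left (hmin j hj) (hw j hj)
  · refine sum_le_sum fun j hj ↦ sum_le_sum_of_subset_of_nonneg
      (monotone_filter_right s fun _ _ h ↦ h.2) fun k hk _ ↦ ?_
    exact mul_nonneg (hw j (mem_of_mem_filter j hj)) (hw k (mem_of_mem_filter k hk))

/-- A form of the Motzkin–Straus inequality. -/
theorem exists_pairwise_not_sq_sum_le_card_mul (r : ι → ι → Prop) [Std.Refl r] [Std.Symm r]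
    [DecidableRel r] {w : ι → K} (s : Finset ι) (hw : ∀ i ∈ s, 0 ≤ w i) :
    ∃ t ⊆ s, (t : Set ι).Pairwise (fun i j ↦ ¬ r i j) ∧
      (∑ i ∈ s, w i) ^ 2 ≤ #t * ∑ i ∈ s, ∑ j ∈ s with r i j, w i * w j := by
  classical
  induction s using Finset.strongInduction with
  | H s ih =>
    rcases s.eq_empty_or_nonempty with rfl | hs
    · exact ⟨∅, by simp⟩
    obtain ⟨i, hi, hmin⟩ := s.exists_min_image (fun i ↦ ∑ j ∈ s with r i j, w j) hs
    have hss : s.filter (¬ r i ·) ⊂ s := filter_ssubset.2 ⟨i, hi, by simpa using refl i⟩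
    have hw' : ∀ j ∈ s.filter (¬ r i ·), 0 ≤ w j := fun j hj ↦ hw j (hss.subset hj)
    obtain ⟨t, hts, htr, htc⟩ := ih _ hss hw'
    have hit : ∀ j ∈ t, ¬ r i j := fun j hj ↦ (mem_filter.1 (hts hj)).2
    refine ⟨insert i t, insert_subset hi (hts.trans hss.subset), ?_, ?_⟩
    · rw [coe_insert, Set.pairwise_insert]
      exact ⟨htr, fun j hj _ ↦ ⟨hit j hj, fun h ↦ hit j hj (symm h)⟩⟩
    have hnonneg : 0 ≤ ∑ j ∈ s with ¬ r i j, ∑ k ∈ s with ¬ r i k ∧ r j k, w j * w k :=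
      sum_nonneg fun j hj ↦ sum_nonneg fun k hk ↦
        mul_nonneg (hw' j hj) (hw k (mem_of_mem_filter k hk))
    simp_rw [filter_filter] at htc
    rw [card_insert_of_notMem fun h ↦ hit i h (refl i), Nat.cast_succ,
      ← sum_filter_add_sum_filter_not s (r i) w]
    refine (add_sq_le_add_one_mul_of_sq_le_mul (by positivity) hnonneg htc).trans ?_
    gcongr
    exact sq_sum_add_sum_mul_le_of_forall_le hw hmin

end MotzkinStraus

section ChargeEstimates

variable {d f : ℚ}

theorem hub_charge_le {l h b m t : ℚ} (hd : 1000 ≤ d) (hf : (d + 1) * (d + 3) ≤ 4 * f)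
    (hf' : 4 * f ≤ (d + 2) ^ 2) (hlf : (1 + l) * (d + 2 - (1 + l)) ≤ f) (hl : 1 ≤ l)
    (hh : 0 ≤ h) (hb : 0 ≤ b) (hm : 0 ≤ m) (hbm : b + m = 0 ∨ 1 ≤ b + m)
    (hsum : l + h + b + m ≤ d) (ht : 0 ≤ t) (htbm : t ≤ b / 12 + m / 2) :
    (1 + l + t) ^ 2 + (h * (1 + l + t) ^ 2 + b * (3 / 4 * (1 + l + t) ^ 2) +
      m * (26 * (1 + l + t))) ≤ f * (1 + l + (1 - d⁻¹) * t) := by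
  have hd0 : 0 < d := by linarith
  obtain hbm | hbm := hbm
  · obtain rfl : b = 0 := by linarith
    obtain rfl : m = 0 := by linarith
    obtain rfl : t = 0 := by linarith
    calc _ = (1 + l) * ((1 + l) * (1 + h)) := by ring
      _ ≤ (1 + l) * ((1 + l) * (d + 2 - (1 + l))) := by gcongr; linarith
      _ ≤ (1 + l) * f := by gcongr
      _ = _ := by ring
  set A := 1 + l + t with hA
  -- Every neighbour that is neither pendant nor a hub leaves a slack proportional to `g`.
  set g := b / 6 + m / 2 with hg
  have hquad : A * (1 + h + 3 / 4 * b) ≤ (d + 2) ^ 2 / 4 - 3 / 8 * (d + 2) * g := calc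
    _ ≤ A * (d + 2 - A - g) := by gcongr; linarith
    _ ≤ (d + 2 - g) ^ 2 / 4 := by linarith [sq_nonneg (2 * A - (d + 2 - g))]
    _ ≤ _ := by nlinarith
  have hfd : f * d⁻¹ ≤ 2 / 7 * (d + 2) := by
    rw [← div_eq_mul_inv, div_le_iff₀ hd0]
    nlinarith
  have hback : f * d⁻¹ * t ≤ A * ((d + 2) / 7 * g) := calc
    _ ≤ 2 / 7 * (d + 2) * g := mul_le_mul hfd (by linarith) ht (by positivity)
    _ = 2 * ((d + 2) / 7 * g) := by ring
    _ ≤ _ := by gcongr; linarith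
  have hslack : A * (1 + h + 3 / 4 * b) + 26 * m + (d + 2) / 7 * g ≤ f := by nlinarith
  calc _ = A * (A * (1 + h + 3 / 4 * b) + 26 * m + (d + 2) / 7 * g) -
        A * ((d + 2) / 7 * g) := by ring
    _ ≤ A * f - f * d⁻¹ * t := by gcongr
    _ = _ := by rw [hA]; ring

theorem heavy_charge_le {h b m t : ℚ} (hd : 1000 ≤ d) (hf : (d + 1) * (d + 3) ≤ 4 * f)
    (hh : 0 ≤ h) (hb : 0 ≤ b) (hsum : h + b + m ≤ d) (htbm : t ≤ b / 12 + m / 2)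
    (ht : 12 ≤ t) :
    (1 + t) ^ 2 + (h * (4 / 3 * (1 + t) ^ 2) + b * (1 + t) ^ 2 + m * (26 * (1 + t))) ≤
      f * (d⁻¹ + (1 - d⁻¹) * t) := by
  have hdinv : d⁻¹ ≤ 1 / 1000 := by
    rw [one_div]; exact inv_anti₀ (by norm_num) hd
  have hdinv0 : 0 ≤ d⁻¹ := by positivity
  have hf0 : 0 ≤ f := by nlinarith
  set A := 1 + t
  have hquad : A * (1 + 4 / 3 * (h + b)) ≤ 4 / 5 * ((d + 2) / 2 + 5 / 16) ^ 2 := calc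
    _ ≤ ((d + 2) / 2 - 5 / 12 * (h + b)) * (1 + 4 / 3 * (h + b)) := by gcongr; linarith
    _ ≤ _ := by
      linarith [sq_nonneg ((d + 2) / 2 + 5 / 16 - 5 / 8 * (1 + 4 / 3 * (h + b)))]
  calc _ ≤ A * (A * (1 + 4 / 3 * (h + b)) + 26 * m) := by
        linarith [mul_nonneg hb (sq_nonneg A)]
    _ ≤ A * (999 / 1000 * (12 / 13) * f) := by gcongr; nlinarith
    _ = f * (999 / 1000 * (12 / 13 * A)) := by ring
    _ ≤ f * (0 + (1 - d⁻¹) * t) := by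
      rw [zero_add]
      gcongr <;> linarith
    _ ≤ _ := by gcongr

theorem light_charge_le {m t : ℚ} (hd : 1000 ≤ d) (hf : (d + 1) * (d + 3) ≤ 4 * f)
    (ht : 0 ≤ t) (ht' : t ≤ 12) (hmt : m ≤ d * t) :
    (1 + t) ^ 2 + m * (13 * (1 + t)) ≤ f * (d⁻¹ + (1 - d⁻¹) * t) := by
  have hd0 : 0 < d := by linarith
  have hself : (1 + t) ^ 2 ≤ f * d⁻¹ := calc
    _ ≤ 13 ^ 2 := by gcongr; linarith
    _ ≤ f * d⁻¹ := by rw [← div_eq_mul_inv, le_div_iff₀ hd0]; nlinarith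
  have hlight : m * (13 * (1 + t)) ≤ f * ((1 - d⁻¹) * t) := calc
    _ ≤ d * t * (13 * 13) := by gcongr; linarith
    _ = (169 * d ^ 2) * (d⁻¹ * t) := by field_simp; ring
    _ ≤ (f * (d - 1)) * (d⁻¹ * t) := mul_le_mul_of_nonneg_right (by nlinarith) (by positivity)
    _ = _ := by field_simp
  linarith

end ChargeEstimates

section BalancedProduct

/-- The bound of the theorem for maximum degree `d`; it is the largest value of `k * (d + 2 - k)`
over the integers `k`. -/
def balancedProduct (d : ℕ) : ℚ := ((⌈(d : ℚ) / 2⌉ : ℚ) + 1) * ((⌊(d : ℚ) / 2⌋ : ℚ) + 1)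

theorem balancedProduct_pos (d : ℕ) : 0 < balancedProduct d := by
  unfold balancedProduct
  positivity

theorem exists_balancedProduct_eq_mul (d : ℕ) :
    ∃ p q : ℕ, balancedProduct d = p * q ∧ p + q = d + 2 ∧ q ≤ p ∧ p ≤ q + 1 := by
  have hceil : ⌈(d : ℚ) / 2⌉ = ((d + 1) / 2 : ℕ) := by
    have := Rat.ceil_natCast_div_natCast d 2
    push_cast at this ⊢
    omega
  have hfloor : ⌊(d : ℚ) / 2⌋ = (d / 2 : ℕ) := by
    simpa using Rat.floor_natCast_div_natCast d 2
  refine ⟨(d + 1) / 2 + 1, d / 2 + 1, ?_, by omega, by omega, by omega⟩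
  rw [balancedProduct, hceil, hfloor]
  norm_cast

theorem mul_add_two_sub_le_balancedProduct (d k : ℕ) :
    (k : ℚ) * (d + 2 - k) ≤ balancedProduct d := by
  obtain ⟨p, q, hpq, hsum, hqp, hpq'⟩ := exists_balancedProduct_eq_mul d
  have hprod : (0 : ℤ) ≤ (k - p) * (k - q) := by
    rcases le_or_gt k q with hk | hk
    · exact mul_nonneg_of_nonpos_of_nonpos (by lia) (by lia)
    · exact mul_nonneg (by lia) (by lia)
  have hprod : (0 : ℚ) ≤ (k - p) * (k - q) := mod_cast hprod
  have hsum : (p + q : ℚ) = d + 2 := mod_cast hsum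
  rw [hpq, ← hsum]
  linarith

theorem four_mul_balancedProduct_le (d : ℕ) : 4 * balancedProduct d ≤ (d + 2) ^ 2 := by
  obtain ⟨p, q, hpq, hsum, -⟩ := exists_balancedProduct_eq_mul d
  have hsum : (p + q : ℚ) = d + 2 := mod_cast hsum
  rw [hpq, ← hsum, ← mul_assoc]
  exact four_mul_le_sq_add _ _

theorem le_four_mul_balancedProduct (d : ℕ) : (d + 1) * (d + 3) ≤ 4 * balancedProduct d := by
  obtain ⟨p, q, hpq, hsum, hqp, hpq'⟩ := exists_balancedProduct_eq_mul d
  have hd : (d : ℚ) = p + q - 2 := by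
    have : (p + q : ℚ) = d + 2 := mod_cast hsum
    linarith
  obtain rfl | rfl : p = q ∨ p = q + 1 := by lia
  all_goals rw [hpq, hd]; push_cast; linarith

end BalancedProduct

section Conflict

variable {V : Type*} {G : SimpleGraph V}

variable (G) in
/-- Two edges conflict if they are equal, share a vertex or are joined by an edge, that is, if they
cannot both belong to an induced matching. -/
def Conflict (e f : Sym2 V) : Prop := ∃ x ∈ e, ∃ y ∈ f, x = y ∨ G.Adj x y

instance : Std.Refl (Conflict G) where
  refl e := ⟨_, e.out_fst_mem, _, e.out_fst_mem, .inl rfl⟩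

instance : Std.Symm (Conflict G) where
  symm _ _ := fun ⟨x, hx, y, hy, h⟩ ↦ ⟨y, hy, x, hx, h.imp Eq.symm SimpleGraph.Adj.symm⟩

theorem isInducedMatching_of_pairwise_not_conflict {M : Finset (Sym2 V)}
    (hM : (M : Set (Sym2 V)) ⊆ G.edgeSet) (h : (M : Set (Sym2 V)).Pairwise (¬ Conflict G · ·)) :
    IsInducedMatching G M :=
  ⟨hM, fun _ he _ hf hef x hx y hy ↦ not_or.1 fun hxy ↦ h he hf hef ⟨x, hx, y, hy, hxy⟩⟩

theorem sq_sum_le_indMatchNum_mul [Finite V] [DecidableRel (Conflict G)] {K : Type*} [CommRing K]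
    [LinearOrder K] [IsStrictOrderedRing K] {E : Finset (Sym2 V)}
    (hE : (E : Set (Sym2 V)) ⊆ G.edgeSet) {w : Sym2 V → K} (hw : ∀ e ∈ E, 0 ≤ w e) :
    (∑ e ∈ E, w e) ^ 2 ≤ indMatchNum G * ∑ e ∈ E, ∑ f ∈ E with Conflict G e f, w e * w f := by
  obtain ⟨M, hME, hM, hsq⟩ := exists_pairwise_not_sq_sum_le_card_mul (Conflict G) E hw
  have hMG := isInducedMatching_of_pairwise_not_conflict ((coe_subset.2 hME).trans hE) hM
  refine hsq.trans (mul_le_mul_of_nonneg_right (mod_cast hMG.card_le_indMatchNum) ?_)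
  exact sum_nonneg fun e he ↦ sum_nonneg fun f hf ↦
    mul_nonneg (hw e he) (hw f (mem_of_mem_filter f hf))

theorem sum_conflict_mul_le_sum_mul [DecidableEq V] [DecidableRel G.Adj] [DecidableRel (Conflict G)]
    {K : Type*} [CommRing K] [LinearOrder K] [IsStrictOrderedRing K] {E : Finset (Sym2 V)}
    {w : Sym2 V → K} (hw : ∀ e ∈ E, 0 ≤ w e) {S : Finset V}
    (hS : ∀ e ∈ E, ∀ f ∈ E, Conflict G e f →
      ∃ x ∈ S, x ∈ e ∧ ∃ y ∈ S, y ∈ f ∧ (x = y ∨ G.Adj x y)) :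
    ∑ e ∈ E, ∑ f ∈ E with Conflict G e f, w e * w f ≤
      ∑ x ∈ S, ∑ y ∈ S with x = y ∨ G.Adj x y,
        (∑ e ∈ E with x ∈ e, w e) * ∑ f ∈ E with y ∈ f, w f := by
  set P : Finset (V × V) := {p ∈ S ×ˢ S | p.1 = p.2 ∨ G.Adj p.1 p.2}
  calc
    _ ≤ ∑ e ∈ E, ∑ f ∈ E, #{p ∈ P | p.1 ∈ e ∧ p.2 ∈ f} * (w e * w f) := by
      refine sum_le_sum fun e he ↦ ?_
      rw [sum_filter]
      refine sum_le_sum fun f hf ↦ ?_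
      have hwef := mul_nonneg (hw e he) (hw f hf)
      split_ifs with hef
      · obtain ⟨x, hxS, hxe, y, hyS, hyf, hxy⟩ := hS e he f hf hef
        refine le_mul_of_one_le_left hwef (mod_cast card_pos.2 ⟨(x, y), ?_⟩)
        simp [P, *]
      · positivity
    _ = ∑ p ∈ P, (∑ e ∈ E with p.1 ∈ e, w e) * ∑ f ∈ E with p.2 ∈ f, w f := by
      simp_rw [sum_mul_sum, sum_filter, card_filter, Nat.cast_sum, sum_mul]
      rw [sum_congr rfl fun _ _ ↦ sum_comm, sum_comm]
      refine sum_congr rfl fun p _ ↦ sum_congr rfl fun e _ ↦ ?_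
      by_cases he : p.1 ∈ e <;> simp [he]
    _ = _ := by rw [sum_filter, sum_product]; simp_rw [sum_filter]

theorem sum_adj_le_sum_adj_of_two_mul_le [DecidableRel G.Adj] {K : Type*} [CommRing K]
    [LinearOrder K] [IsStrictOrderedRing K] {S : Finset V} {F c : V → V → K}
    (h : ∀ x ∈ S, ∀ y ∈ S, 2 * F x y ≤ c x y + c y x) :
    ∑ x ∈ S, ∑ y ∈ S with G.Adj x y, F x y ≤ ∑ x ∈ S, ∑ y ∈ S with G.Adj x y, c x y := by
  have hswap : ∑ x ∈ S, ∑ y ∈ S with G.Adj x y, c y x = ∑ x ∈ S, ∑ y ∈ S with G.Adj x y, c x y :=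
    sum_comm' fun x y ↦ by grind [G.adj_comm]
  have hdouble : 2 * ∑ x ∈ S, ∑ y ∈ S with G.Adj x y, F x y ≤
      ∑ x ∈ S, ∑ y ∈ S with G.Adj x y, (c x y + c y x) := by
    simp_rw [mul_sum]
    exact sum_le_sum fun x hx ↦ sum_le_sum fun y hy ↦ h x hx y (mem_of_mem_filter y hy)
  simp_rw [sum_add_distrib] at hdouble
  linarith

end Conflict

section PendantsAndHubs

variable {V : Type*} [Fintype V] (G : SimpleGraph V) [DecidableRel G.Adj]

/-- A pendant vertex: a vertex of degree one that does not lie in a `K₂` component. -/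
def IsPendant (u : V) : Prop := G.degree u = 1 ∧ ∀ v, G.Adj u v → 2 ≤ G.degree v

/-- A hub is a vertex with a pendant neighbour. -/
def IsHub (v : V) : Prop := ∃ u, G.Adj v u ∧ IsPendant G u

instance : DecidablePred (IsPendant G) := fun _ ↦ inferInstanceAs (Decidable (_ ∧ _))

instance : DecidablePred (IsHub G) := fun _ ↦ inferInstanceAs (Decidable (∃ _, _))

/-- The set of the vertices that are not pendant. -/
def core : Finset V := {x | ¬ IsPendant G x}

/-- The neighbours of `x` in the core. -/
def coreNeighbors (x : V) : Finset V := {y ∈ core G | G.Adj x y}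

/-- The pendant neighbours of `x`; there are some exactly if `x` is a hub. -/
def pendantNeighbors (x : V) : Finset V := {y ∈ G.neighborFinset x | IsPendant G y}

/-- The neighbours over which a vertex spreads its unit of weight: the pendant neighbours for a
hub, all neighbours otherwise. -/
def targets (u : V) : Finset V :=
  if IsHub G u then pendantNeighbors G u else G.neighborFinset u

/-- The weight that `x` receives from its neighbours that are neither pendant nor hubs. -/
def inflow (x : V) : ℚ := ∑ u ∈ coreNeighbors G x with ¬ IsHub G u, (G.degree u : ℚ)⁻¹

variable {G} {u v w x y : V} {e f : Sym2 V}

@[simp]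
theorem mem_core : x ∈ core G ↔ ¬ IsPendant G x := by simp [core]

@[simp]
theorem mem_coreNeighbors : y ∈ coreNeighbors G x ↔ ¬ IsPendant G y ∧ G.Adj x y := by
  simp [coreNeighbors]

@[simp]
theorem mem_pendantNeighbors : y ∈ pendantNeighbors G x ↔ G.Adj x y ∧ IsPendant G y := by
  simp [pendantNeighbors]

theorem IsPendant.eq_of_adj (hu : IsPendant G u) (hv : G.Adj u v) (hw : G.Adj u w) : v = w :=
  (SimpleGraph.degree_eq_one_iff_existsUnique_adj.1 hu.1).unique hv hw

theorem IsPendant.not_isPendant_of_adj (hu : IsPendant G u) (h : G.Adj u v) : ¬ IsPendant G v :=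
  fun hv ↦ absurd (hu.2 v h) (by simp [hv.1])

theorem IsHub.not_isPendant (hv : IsHub G v) : ¬ IsPendant G v := by
  obtain ⟨u, hvu, hu⟩ := hv
  exact hu.not_isPendant_of_adj hvu.symm

theorem IsHub.two_le_degree (hv : IsHub G v) : 2 ≤ G.degree v := by
  obtain ⟨u, hvu, hu⟩ := hv
  exact hu.2 v hvu.symm

theorem two_le_degree_of_adj (hy : ¬ IsPendant G y) (hxy : G.Adj x y) (hx : 2 ≤ G.degree x) :
    2 ≤ G.degree y := by
  by_contra! hlt
  have hy1 : G.degree y = 1 :=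
    le_antisymm (Nat.lt_succ_iff.1 hlt) ((G.degree_pos_iff_exists_adj y).2 ⟨x, hxy.symm⟩)
  refine hy ⟨hy1, fun z hyz ↦ ?_⟩
  rwa [(SimpleGraph.degree_eq_one_iff_existsUnique_adj.1 hy1).unique hyz hxy.symm]

theorem IsPendant.exists_mem_core_of_mem (hx : IsPendant G x) (he : e ∈ G.edgeSet)
    (hf : f ∈ G.edgeSet) (hxe : x ∈ e) (hyf : y ∈ f) (hxy : x = y ∨ G.Adj x y) :
    ∃ a ∈ core G, a ∈ e ∧ a ∈ f := by
  obtain ⟨a, rfl⟩ := hxe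
  have hxa : G.Adj x a := he
  refine ⟨a, mem_core.2 (hx.not_isPendant_of_adj hxa), Sym2.mem_mk_right x a, ?_⟩
  obtain rfl | hxy := hxy
  · obtain ⟨b, rfl⟩ := hyf
    have hxb : G.Adj x b := hf
    rw [hx.eq_of_adj hxa hxb]
    exact Sym2.mem_mk_right x b
  · rwa [hx.eq_of_adj hxa hxy]

theorem exists_mem_core_of_conflict (he : e ∈ G.edgeSet) (hf : f ∈ G.edgeSet)
    (hef : Conflict G e f) :
    ∃ x ∈ core G, x ∈ e ∧ ∃ y ∈ core G, y ∈ f ∧ (x = y ∨ G.Adj x y) := by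
  obtain ⟨x, hxe, y, hyf, hxy⟩ := hef
  by_cases hx : IsPendant G x
  · obtain ⟨a, ha, hae, haf⟩ := hx.exists_mem_core_of_mem he hf hxe hyf hxy
    exact ⟨a, ha, hae, a, ha, haf, .inl rfl⟩
  by_cases hy : IsPendant G y
  · obtain ⟨a, ha, haf, hae⟩ := hy.exists_mem_core_of_mem hf he hyf hxe
      (hxy.imp Eq.symm SimpleGraph.Adj.symm)
    exact ⟨a, ha, hae, a, ha, haf, .inl rfl⟩
  exact ⟨x, mem_core.2 hx, hxe, y, mem_core.2 hy, hyf, hxy⟩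

theorem pendantNeighbors_nonempty_iff : (pendantNeighbors G x).Nonempty ↔ IsHub G x := by
  simp [Finset.Nonempty, IsHub]

theorem card_pendantNeighbors_add_card_coreNeighbors (x : V) :
    #(pendantNeighbors G x) + #(coreNeighbors G x) = G.degree x := by
  have hcore : coreNeighbors G x = {y ∈ G.neighborFinset x | ¬ IsPendant G y} := by
    ext y
    simp [and_comm]
  rw [hcore, pendantNeighbors, card_filter_add_card_filter_not, G.card_neighborFinset_eq_degree]

theorem card_pendantNeighbors_of_not_isHub (hx : ¬ IsHub G x) : #(pendantNeighbors G x) = 0 := by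
  rwa [card_eq_zero, ← not_nonempty_iff_eq_empty, pendantNeighbors_nonempty_iff]

theorem card_coreNeighbors_of_not_isHub (hx : ¬ IsHub G x) :
    #(coreNeighbors G x) = G.degree x := by
  rw [← card_pendantNeighbors_add_card_coreNeighbors, card_pendantNeighbors_of_not_isHub hx,
    zero_add]

theorem mem_targets : v ∈ targets G u ↔ G.Adj u v ∧ (IsHub G u → IsPendant G v) := by
  unfold targets
  split_ifs with hu <;> simp [hu]

theorem targets_nonempty (hu : 0 < G.degree u) : (targets G u).Nonempty := by
  unfold targets
  split_ifs with h
  · exact pendantNeighbors_nonempty_iff.2 h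
  · rwa [← card_pos, G.card_neighborFinset_eq_degree]

theorem card_targets_of_not_isHub (hu : ¬ IsHub G u) : #(targets G u) = G.degree u := by
  rw [targets, if_neg hu, G.card_neighborFinset_eq_degree]

theorem inflow_eq_sum_ite (x : V) :
    inflow G x = ∑ y ∈ coreNeighbors G x, if IsHub G y then 0 else (G.degree y : ℚ)⁻¹ := by
  simp_rw [inflow, sum_filter, ite_not]

theorem inflow_nonneg (x : V) : 0 ≤ inflow G x :=
  sum_nonneg fun _ _ ↦ by positivity

theorem inflow_le_degree (x : V) : inflow G x ≤ G.degree x := by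
  calc inflow G x ≤ ∑ u ∈ coreNeighbors G x with ¬ IsHub G u, 1 :=
        sum_le_sum fun u _ ↦ Nat.cast_inv_le_one _
    _ ≤ #(coreNeighbors G x) := by
      rw [sum_const, nsmul_one]
      exact mod_cast card_filter_le _ _
    _ ≤ G.degree x := by
      rw [← card_pendantNeighbors_add_card_coreNeighbors x]
      exact mod_cast Nat.le_add_left _ _

theorem sum_card_pendantNeighbors :
    ∑ x ∈ core G, #(pendantNeighbors G x) = #{u | IsPendant G u} := by
  calc ∑ x ∈ core G, #(pendantNeighbors G x)
      = ∑ x ∈ core G, ∑ u ∈ pendantNeighbors G x, 1 := by simp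
    _ = ∑ u with IsPendant G u, ∑ x ∈ G.neighborFinset u, 1 := sum_comm' fun x u ↦ by
        have (hu : IsPendant G u) (hux : G.Adj u x) := hu.not_isPendant_of_adj hux
        grind [mem_core, mem_pendantNeighbors, G.mem_neighborFinset, G.adj_comm]
    _ = ∑ u with IsPendant G u, 1 := sum_congr rfl fun u hu ↦ by
        simp [(mem_filter.1 hu).2.1]
    _ = _ := by simp

theorem sum_inflow (hdeg : ∀ v, 0 < G.degree v) :
    ∑ x ∈ core G, inflow G x = #{u ∈ core G | ¬ IsHub G u} := by
  calc ∑ x ∈ core G, inflow G x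
      = ∑ u ∈ core G with ¬ IsHub G u, ∑ _x ∈ coreNeighbors G u, (G.degree u : ℚ)⁻¹ :=
        sum_comm' fun _ _ ↦ by
          grind [mem_core, mem_coreNeighbors, G.adj_comm]
    _ = ∑ u ∈ core G with ¬ IsHub G u, 1 := sum_congr rfl fun u hu ↦ by
        rw [sum_const, card_coreNeighbors_of_not_isHub (mem_filter.1 hu).2, nsmul_eq_mul,
          mul_inv_cancel₀ (mod_cast (hdeg u).ne')]
    _ = _ := by simp

variable (G) in
/-- The share of the vertex count that pays for the charges at a core vertex `x`. A hub keeps its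
own unit and takes the units of its pendant neighbours; every other core vertex keeps `δ` and passes
the rest on to its neighbours. -/
def credit (δ : ℚ) (x : V) : ℚ :=
  (if IsHub G x then 1 else δ) + #(pendantNeighbors G x) + (1 - δ) * inflow G x

theorem sum_credit (hdeg : ∀ v, 0 < G.degree v) (δ : ℚ) :
    ∑ x ∈ core G, credit G δ x = Fintype.card V := by
  have hcard : #{x ∈ core G | IsHub G x} + #{x ∈ core G | ¬ IsHub G x} +
      #{x | IsPendant G x} = Fintype.card V := by
    rw [card_filter_add_card_filter_not, add_comm, core, card_filter_add_card_filter_not, card_univ]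
  have hpend : ∑ x ∈ core G, (#(pendantNeighbors G x) : ℚ) = #{x | IsPendant G x} :=
    mod_cast sum_card_pendantNeighbors
  simp_rw [credit, sum_add_distrib, ← mul_sum, sum_inflow hdeg, hpend, sum_ite, sum_const,
    nsmul_eq_mul, ← hcard]
  push_cast
  ring

end PendantsAndHubs

section Loads

variable {V : Type*} [Fintype V] [DecidableEq V] (G : SimpleGraph V) [DecidableRel G.Adj]

/-- The weight of an edge when every vertex spreads a unit evenly over its edges to `targets`. -/
def edgeWeight (e : Sym2 V) : ℚ :=
  ∑ u, ∑ v ∈ targets G u with s(u, v) = e, (#(targets G u) : ℚ)⁻¹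

/-- The total weight of the edges at a vertex. -/
def load (x : V) : ℚ := ∑ e ∈ G.edgeFinset with x ∈ e, edgeWeight G e

variable {G} {x y : V}

theorem edgeWeight_nonneg (e : Sym2 V) : 0 ≤ edgeWeight G e :=
  sum_nonneg fun _ _ ↦ sum_nonneg fun _ _ ↦ by positivity

theorem load_nonneg (x : V) : 0 ≤ load G x := sum_nonneg fun e _ ↦ edgeWeight_nonneg e

theorem sum_edgeWeight_filter (P : Sym2 V → Prop) [DecidablePred P] :
    ∑ e ∈ G.edgeFinset with P e, edgeWeight G e =
      ∑ u, ∑ v ∈ targets G u with P s(u, v), (#(targets G u) : ℚ)⁻¹ := by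
  unfold edgeWeight
  rw [sum_comm]
  refine sum_congr rfl fun u _ ↦ ?_
  rw [sum_fiberwise_eq_sum_filter]
  refine sum_congr (filter_congr fun v hv ↦ ?_) fun _ _ ↦ rfl
  simp [(mem_targets.1 hv).1]

theorem sum_edgeWeight (hdeg : ∀ v, 0 < G.degree v) :
    ∑ e ∈ G.edgeFinset, edgeWeight G e = Fintype.card V := by
  have hunit (u : V) : (#(targets G u) : ℚ) ≠ 0 := mod_cast (targets_nonempty (hdeg u)).card_ne_zero
  simpa [hunit] using sum_edgeWeight_filter (G := G) fun _ ↦ True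

theorem sum_inv_card_targets (hx : x ∈ core G) :
    ∑ u with x ∈ targets G u, (#(targets G u) : ℚ)⁻¹ = #(pendantNeighbors G x) + inflow G x := by
  have hx := mem_core.1 hx
  have hpend : {u ∈ ({u | x ∈ targets G u} : Finset V) | IsPendant G u} = pendantNeighbors G x := by
    ext u
    have (hu : IsPendant G u) : ¬ IsHub G u := fun h ↦ h.not_isPendant hu
    grind [mem_targets, mem_pendantNeighbors, G.adj_comm]
  have hcore : {u ∈ ({u | x ∈ targets G u} : Finset V) | ¬ IsPendant G u} =
      {u ∈ coreNeighbors G x | ¬ IsHub G u} := by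
    ext u
    grind [mem_targets, mem_coreNeighbors, G.adj_comm]
  rw [← sum_filter_add_sum_filter_not _ (IsPendant G), hpend, hcore, inflow, card_eq_sum_ones,
    Nat.cast_sum]
  congr 1
  · refine sum_congr rfl fun u hu ↦ ?_
    have hu := (mem_pendantNeighbors.1 hu).2
    simp [card_targets_of_not_isHub fun h ↦ h.not_isPendant hu, hu.1]
  · exact sum_congr rfl fun u hu ↦ by rw [card_targets_of_not_isHub (mem_filter.1 hu).2]

theorem load_eq (hx : x ∈ core G) (hdeg : 0 < G.degree x) :
    load G x = 1 + #(pendantNeighbors G x) + inflow G x := by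
  have hown : ∑ v ∈ targets G x with x ∈ s(x, v), (#(targets G x) : ℚ)⁻¹ = 1 := by
    have hunit : (#(targets G x) : ℚ) ≠ 0 := mod_cast (targets_nonempty hdeg).card_ne_zero
    simp [hunit]
  have hother (u : V) (hu : u ∈ univ.erase x) :
      ∑ v ∈ targets G u with x ∈ s(u, v), (#(targets G u) : ℚ)⁻¹ =
        if x ∈ targets G u then (#(targets G u) : ℚ)⁻¹ else 0 := by
    split_ifs with h <;> simp [(ne_of_mem_erase hu).symm, filter_eq, h]
  have hself : x ∉ targets G x := fun h ↦ (mem_targets.1 h).1.ne rfl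
  rw [load, sum_edgeWeight_filter, ← add_sum_erase univ _ (mem_univ x), hown, sum_congr rfl hother,
    sum_erase univ (f := fun u ↦ if x ∈ targets G u then (#(targets G u) : ℚ)⁻¹ else 0)
      (if_neg hself), ← sum_filter, sum_inv_card_targets hx, add_assoc]

end Loads

section Charges

variable {V : Type*} [Fintype V] [DecidableEq V] {G : SimpleGraph V} [DecidableRel G.Adj] {d : ℕ}
  {x y : V}

/-- The types of core vertices that the charging scheme distinguishes. -/
inductive Kind
  | hub
  | heavy
  | light

variable (G) in
/-- A core vertex that is not a hub is heavy if its load is at least `13`. -/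
def kind (x : V) : Kind :=
  if IsHub G x then .hub else if 13 ≤ load G x then .heavy else .light

/-- The part of `2 * load G x * load G y` that is charged to a vertex `x` of the first kind and of
load `a` when its neighbour `y` is of the second kind. The coefficients for hubs and heavy vertices
come from the AM–GM inequality, those for light vertices from the threshold `13`. -/
def charge : Kind → Kind → ℚ → ℚ
  | .hub, .hub, a | .heavy, .heavy, a => a ^ 2
  | .hub, .heavy, a => 3 / 4 * a ^ 2
  | .heavy, .hub, a => 4 / 3 * a ^ 2
  | .light, .light, a => 13 * a
  | .light, _, _ => 0
  | _, .light, a => 26 * a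

theorem two_mul_load_mul_load_le (x y : V) :
    2 * (load G x * load G y) ≤
      charge (kind G x) (kind G y) (load G x) + charge (kind G y) (kind G x) (load G y) := by
  have hx := load_nonneg (G := G) x
  have hy := load_nonneg (G := G) y
  unfold kind
  split_ifs <;> simp only [charge] <;>
    nlinarith [sq_nonneg (load G x - load G y), sq_nonneg (3 * load G x - 4 * load G y),
      sq_nonneg (4 * load G x - 3 * load G y)]

variable (G) in
open scoped Classical in
/-- The number of core neighbours of `x` of the kind `k`. -/
noncomputable def kindCount (x : V) (k : Kind) : ℕ := #{y ∈ coreNeighbors G x | kind G y = k}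

theorem sum_coreNeighbors_kind (x : V) (F : Kind → ℚ) :
    ∑ y ∈ coreNeighbors G x, F (kind G y) =
      kindCount G x .hub * F .hub + kindCount G x .heavy * F .heavy +
        kindCount G x .light * F .light := by
  classical
  have hF (k : Kind) : F k = (if k = .hub then F .hub else 0) +
      (if k = .heavy then F .heavy else 0) + if k = .light then F .light else 0 := by
    cases k <;> simp
  simp_rw [hF (kind G _), sum_add_distrib, ← sum_filter, sum_const, nsmul_eq_mul, kindCount]

theorem card_pendantNeighbors_add_kindCount (x : V) :
    #(pendantNeighbors G x) + kindCount G x .hub + kindCount G x .heavy + kindCount G x .light =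
      G.degree x := by
  have hcore : #(coreNeighbors G x) =
      kindCount G x .hub + kindCount G x .heavy + kindCount G x .light := by
    have := sum_coreNeighbors_kind (G := G) x 1
    simp only [Pi.one_apply, sum_const, nsmul_one, mul_one] at this
    exact_mod_cast this
  rw [← card_pendantNeighbors_add_card_coreNeighbors, hcore]
  ring

theorem load_le_one_add_degree (hx : x ∈ core G) (hhub : ¬ IsHub G x) (hdeg : 0 < G.degree x) :
    load G x ≤ 1 + G.degree x := by
  rw [load_eq hx hdeg, card_pendantNeighbors_of_not_isHub hhub]
  simpa using inflow_le_degree x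

theorem inflow_le (hdeg : ∀ v, 0 < G.degree v) (hx : 2 ≤ G.degree x) :
    inflow G x ≤ kindCount G x .heavy / 12 + kindCount G x .light / 2 := by
  have hsum := sum_coreNeighbors_kind (G := G) x fun
    | .hub => 0
    | .heavy => 12⁻¹
    | .light => 2⁻¹
  simp only [mul_zero, zero_add, ← div_eq_mul_inv] at hsum
  rw [inflow_eq_sum_ite, ← hsum]
  refine sum_le_sum fun y hy ↦ ?_
  obtain ⟨hyp, hxy⟩ := mem_coreNeighbors.1 hy
  unfold kind
  split_ifs with hhub hheavy
  · rfl
  · have hload := load_le_one_add_degree (mem_core.2 hyp) hhub (hdeg y)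
    exact inv_anti₀ (by norm_num) (by linarith)
  · exact inv_anti₀ (by norm_num) (mod_cast two_le_degree_of_adj hyp hxy hx)

theorem kindCount_light_le_mul_inflow (hmax : ∀ v, G.degree v ≤ d) (hdeg : ∀ v, 0 < G.degree v)
    (x : V) : kindCount G x .light ≤ d * inflow G x := by
  have hsum := sum_coreNeighbors_kind (G := G) x fun
    | .light => 1
    | _ => 0
  simp only [mul_zero, zero_add, mul_one] at hsum
  rw [inflow_eq_sum_ite, ← hsum, mul_sum]
  refine sum_le_sum fun y _ ↦ ?_
  have hdeg := hdeg y
  have hd : 1 ≤ d * (G.degree y : ℚ)⁻¹ := by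
    rw [← div_eq_mul_inv, one_le_div (mod_cast hdeg)]
    exact mod_cast hmax y
  unfold kind
  split_ifs
  · simp
  · exact zero_le_one.trans hd
  · exact hd

variable (G) in
/-- The total charge at `x`: the square of its load, for the pair `(x, x)`, together with the
charges on account of its core neighbours. -/
def totalCharge (x : V) : ℚ :=
  load G x ^ 2 + ∑ y ∈ coreNeighbors G x, charge (kind G x) (kind G y) (load G x)

theorem totalCharge_le_of_isHub (hd : 1000 ≤ d) (hmax : ∀ v, G.degree v ≤ d)
    (hdeg : ∀ v, 0 < G.degree v) (hhub : IsHub G x) :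
    totalCharge G x ≤ balancedProduct d * credit G (d : ℚ)⁻¹ x := by
  have hload := load_eq (mem_core.2 hhub.not_isPendant) (hdeg x)
  have hkind : kind G x = .hub := if_pos hhub
  have hpend : 1 ≤ #(pendantNeighbors G x) := card_pos.2 (pendantNeighbors_nonempty_iff.2 hhub)
  have hprod := mul_add_two_sub_le_balancedProduct d (1 + #(pendantNeighbors G x))
  push_cast at hprod
  have hsum := (card_pendantNeighbors_add_kindCount x).trans_le (hmax x)
  rw [totalCharge, sum_coreNeighbors_kind x fun k ↦ charge (kind G x) k (load G x), credit,
    if_pos hhub, hkind, hload]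
  refine hub_charge_le (mod_cast hd) (le_four_mul_balancedProduct d)
    (four_mul_balancedProduct_le d) hprod (mod_cast hpend) (by positivity) (by positivity)
    (by positivity) ?_ (mod_cast hsum) (inflow_nonneg x) (inflow_le hdeg hhub.two_le_degree)
  norm_cast
  omega

theorem totalCharge_le_of_heavy (hd : 1000 ≤ d) (hmax : ∀ v, G.degree v ≤ d)
    (hdeg : ∀ v, 0 < G.degree v) (hx : x ∈ core G) (hhub : ¬ IsHub G x) (hheavy : 13 ≤ load G x) :
    totalCharge G x ≤ balancedProduct d * credit G (d : ℚ)⁻¹ x := by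
  have hload := load_eq hx (hdeg x)
  have hkind : kind G x = .heavy := by rw [kind, if_neg hhub, if_pos hheavy]
  have hpend := card_pendantNeighbors_of_not_isHub hhub
  have hsum := (card_pendantNeighbors_add_kindCount x).trans_le (hmax x)
  rw [hpend, zero_add] at hsum
  rw [hpend, Nat.cast_zero, add_zero] at hload
  have hinflow := inflow_le_degree (G := G) x
  have hdeg2 : (2 : ℚ) ≤ G.degree x := by linarith
  rw [totalCharge, sum_coreNeighbors_kind x fun k ↦ charge (kind G x) k (load G x), credit,
    if_neg hhub, hpend, Nat.cast_zero, add_zero, hkind, hload]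
  exact heavy_charge_le (mod_cast hd) (le_four_mul_balancedProduct d) (by positivity)
    (by positivity) (mod_cast hsum) (inflow_le hdeg (mod_cast hdeg2)) (by linarith)

theorem totalCharge_le_of_light (hd : 1000 ≤ d) (hmax : ∀ v, G.degree v ≤ d)
    (hdeg : ∀ v, 0 < G.degree v) (hx : x ∈ core G) (hhub : ¬ IsHub G x)
    (hlight : ¬ 13 ≤ load G x) :
    totalCharge G x ≤ balancedProduct d * credit G (d : ℚ)⁻¹ x := by
  have hload := load_eq hx (hdeg x)
  have hkind : kind G x = .light := by rw [kind, if_neg hhub, if_neg hlight]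
  have hpend := card_pendantNeighbors_of_not_isHub hhub
  rw [hpend, Nat.cast_zero, add_zero] at hload
  rw [totalCharge, sum_coreNeighbors_kind x fun k ↦ charge (kind G x) k (load G x), credit,
    if_neg hhub, hpend, Nat.cast_zero, add_zero, hkind, hload]
  simp only [charge, mul_zero, zero_add]
  exact light_charge_le (mod_cast hd) (le_four_mul_balancedProduct d) (inflow_nonneg x)
    (by linarith) (kindCount_light_le_mul_inflow hmax hdeg x)

theorem totalCharge_le (hd : 1000 ≤ d) (hmax : ∀ v, G.degree v ≤ d)
    (hdeg : ∀ v, 0 < G.degree v) (hx : x ∈ core G) :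
    totalCharge G x ≤ balancedProduct d * credit G (d : ℚ)⁻¹ x := by
  by_cases hhub : IsHub G x
  · exact totalCharge_le_of_isHub hd hmax hdeg hhub
  by_cases hheavy : 13 ≤ load G x
  · exact totalCharge_le_of_heavy hd hmax hdeg hx hhub hheavy
  · exact totalCharge_le_of_light hd hmax hdeg hx hhub hheavy

theorem sum_load_mul_load_le_sum_totalCharge :
    ∑ x ∈ core G, ∑ y ∈ core G with x = y ∨ G.Adj x y, load G x * load G y ≤
      ∑ x ∈ core G, totalCharge G x := by
  have hsplit (x : V) (hx : x ∈ core G) :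
      ∑ y ∈ core G with x = y ∨ G.Adj x y, load G x * load G y =
        load G x ^ 2 + ∑ y ∈ core G with G.Adj x y, load G x * load G y := by
    have hinsert : {y ∈ core G | x = y ∨ G.Adj x y} = insert x {y ∈ core G | G.Adj x y} := by
      rw [filter_or, filter_eq, if_pos hx, insert_eq]
    rw [hinsert, sum_insert (by simp), sq]
  rw [sum_congr rfl hsplit, sum_add_distrib]
  unfold totalCharge coreNeighbors
  rw [sum_add_distrib]
  exact add_le_add_right (sum_adj_le_sum_adj_of_two_mul_le
    (c := fun x y ↦ charge (kind G x) (kind G y) (load G x))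
    fun x _ y _ ↦ two_mul_load_mul_load_le x y) _

theorem sum_conflict_edgeWeight_mul_le [DecidableRel (Conflict G)] (hd : 1000 ≤ d)
    (hmax : ∀ v, G.degree v ≤ d) (hdeg : ∀ v, 0 < G.degree v) :
    ∑ e ∈ G.edgeFinset, ∑ f ∈ G.edgeFinset with Conflict G e f,
      edgeWeight G e * edgeWeight G f ≤ balancedProduct d * Fintype.card V := by
  calc
    _ ≤ ∑ x ∈ core G, ∑ y ∈ core G with x = y ∨ G.Adj x y, load G x * load G y :=
      sum_conflict_mul_le_sum_mul (fun e _ ↦ edgeWeight_nonneg e) fun e he f hf ↦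
        exists_mem_core_of_conflict (G.mem_edgeFinset.1 he) (G.mem_edgeFinset.1 hf)
    _ ≤ ∑ x ∈ core G, totalCharge G x := sum_load_mul_load_le_sum_totalCharge
    _ ≤ ∑ x ∈ core G, balancedProduct d * credit G (d : ℚ)⁻¹ x :=
      sum_le_sum fun x hx ↦ totalCharge_le hd hmax hdeg hx
    _ = _ := by rw [← mul_sum, sum_credit hdeg]

end Charges

end InducedMatching

open InducedMatching in
theorem indMatchNum_ge_of_large_maxDegree_general {V : Type*} [Fintype V] (G : SimpleGraph V)
    [DecidableRel G.Adj] {d : ℕ} (hd : 1000 ≤ d) (hmax : ∀ v, G.degree v ≤ d)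
    (hdeg : ∀ v, 0 < G.degree v) :
    (Fintype.card V : ℚ) / (((⌈(d : ℚ) / 2⌉ : ℚ) + 1) * ((⌊(d : ℚ) / 2⌋ : ℚ) + 1)) ≤
      indMatchNum G := by
  classical
  change _ / balancedProduct d ≤ _
  have hsq : (Fintype.card V : ℚ) ^ 2 ≤ indMatchNum G * (balancedProduct d * Fintype.card V) := calc
    _ = (∑ e ∈ G.edgeFinset, edgeWeight G e) ^ 2 := by rw [sum_edgeWeight hdeg]
    _ ≤ indMatchNum G * ∑ e ∈ G.edgeFinset, ∑ f ∈ G.edgeFinset with Conflict G e f,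
        edgeWeight G e * edgeWeight G f :=
      sq_sum_le_indMatchNum_mul G.coe_edgeFinset.subset fun e _ ↦ edgeWeight_nonneg e
    _ ≤ _ := by
      gcongr
      exact sum_conflict_edgeWeight_mul_le hd hmax hdeg
  rw [div_le_iff₀ (balancedProduct_pos d)]
  obtain hn | hn := (Nat.cast_nonneg (α := ℚ) (Fintype.card V)).eq_or_lt
  · rw [← hn]
    exact mul_nonneg (Nat.cast_nonneg _) (balancedProduct_pos d).le
  · refine le_of_mul_le_mul_right ?_ hn
    rwa [← sq, mul_assoc]

/-- Theorem 1 (Joos): for every graph `G` with maximum degree `Δ ≥ 1000` and without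
isolated vertices, `ν_s(G) ≥ n(G) / ((⌈Δ/2⌉+1)(⌊Δ/2⌋+1))`. -/
theorem indMatchNum_ge_of_large_maxDegree :
    ∀ (V : Type) [Fintype V] [DecidableEq V] (G : SimpleGraph V) [DecidableRel G.Adj],
      1000 ≤ G.maxDegree →
      (∀ v : V, 0 < G.degree v) →
      (Fintype.card V : ℚ) /
          (((⌈(G.maxDegree : ℚ) / 2⌉ : ℚ) + 1) * ((⌊(G.maxDegree : ℚ) / 2⌋ : ℚ) + 1))
        ≤ (indMatchNum G : ℚ) :=
  fun _ _ _ G _ hΔ hdeg ↦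
    indMatchNum_ge_of_large_maxDegree_general G hΔ G.degree_le_maxDegree hdeg
end

section
/- Let Δ ≥ 3 be an integer and let H₁ be the graph obtained from the complete graph on ⌈Δ/2⌉ + 1 vertices by attaching to each of its vertices ⌊Δ/2⌋ new pendant vertices (i.e., ⌊Δ/2⌋ new vertices of degree 1 adjacent only to that vertex). Then H₁ has maximum degree Δ, ν_s(H₁) = 1, and n(H₁) = (⌈Δ/2⌉ + 1) · (⌊Δ/2⌋ + 1). In particular, the bound ν_s(G) ≥ n(G)/((⌈Δ/2⌉+1)(⌊Δ/2⌋+1)) is attained with equality by H₁. -/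
/-- Base relation for the graph obtained from the complete graph on `Fin m` by attaching
`k` pendant vertices to each of its vertices: the pendant vertex `(j, t)` is adjacent
exactly to the clique vertex `j`. -/
def cliquePendantRel (m k : ℕ) : (Fin m ⊕ Fin m × Fin k) → (Fin m ⊕ Fin m × Fin k) → Bool
  | Sum.inl _, Sum.inl _ => true
  | Sum.inl i, Sum.inr p => p.1 = i
  | _, _ => false

/-- The graph obtained from the complete graph on `m` vertices by attaching `k` pendant
vertices to each of its vertices. -/
def cliquePendant (m k : ℕ) : SimpleGraph (Fin m ⊕ Fin m × Fin k) :=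
  SimpleGraph.fromRel (fun a b => cliquePendantRel m k a b = true)

instance (m k : ℕ) : DecidableRel (cliquePendant m k).Adj := fun a b =>
  inferInstanceAs
    (Decidable (a ≠ b ∧ (cliquePendantRel m k a b = true ∨ cliquePendantRel m k b a = true)))

section InducedMatching

variable {V : Type*} {G : SimpleGraph V}

theorem isInducedMatching_singleton {e : Sym2 V} (he : e ∈ G.edgeSet) :
    IsInducedMatching G {e} := by
  refine ⟨by simpa using he, fun f hf g hg hfg => ?_⟩
  exact absurd ((Finset.mem_singleton.1 hf).trans (Finset.mem_singleton.1 hg).symm) hfg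

-- Two edges of an induced matching would meet the clique in equal or adjacent vertices.
theorem IsInducedMatching.card_le_one_of_isClique_of_isVertexCover {M : Finset (Sym2 V)}
    (hM : IsInducedMatching G M) {s : Set V} (hclique : G.IsClique s)
    (hcover : G.IsVertexCover s) : M.card ≤ 1 := by
  have exists_mem_of_mem : ∀ e ∈ M, ∃ v ∈ s, v ∈ e := by
    intro e he
    have hedge : e ∈ G.edgeSet := hM.1 he
    induction e with
    | _ x y =>
      rcases hcover hedge with hx | hy
      · exact ⟨x, hx, Sym2.mem_mk_left x y⟩
      · exact ⟨y, hy, Sym2.mem_mk_right x y⟩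
  refine Finset.card_le_one.2 fun e he f hf => ?_
  by_contra hef
  obtain ⟨v, hvs, hve⟩ := exists_mem_of_mem e he
  obtain ⟨w, hws, hwf⟩ := exists_mem_of_mem f hf
  obtain ⟨hvw, hnadj⟩ := hM.2 e he f hf hef v hve w hwf
  exact hnadj (hclique hvs hws hvw)

theorem indMatchNum_eq_one_of_isClique_of_isVertexCover (hG : G ≠ ⊥) {s : Set V}
    (hclique : G.IsClique s) (hcover : G.IsVertexCover s) : indMatchNum G = 1 := by
  obtain ⟨e, he⟩ := SimpleGraph.edgeSet_nonempty.2 hG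
  refine IsGreatest.csSup_eq
    ⟨⟨{e}, isInducedMatching_singleton he, Finset.card_singleton e⟩, ?_⟩
  rintro _ ⟨M, hM, rfl⟩
  exact hM.card_le_one_of_isClique_of_isVertexCover hclique hcover

end InducedMatching

namespace cliquePendant

variable {m k : ℕ}

@[simp]
theorem adj_inl_inl {i j : Fin m} :
    (cliquePendant m k).Adj (Sum.inl i) (Sum.inl j) ↔ i ≠ j := by
  simp [cliquePendant, cliquePendantRel]

@[simp]
theorem adj_inl_inr {i : Fin m} {p : Fin m × Fin k} :
    (cliquePendant m k).Adj (Sum.inl i) (Sum.inr p) ↔ p.1 = i := by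
  simp [cliquePendant, cliquePendantRel]

@[simp]
theorem adj_inr_inl {i : Fin m} {p : Fin m × Fin k} :
    (cliquePendant m k).Adj (Sum.inr p) (Sum.inl i) ↔ p.1 = i := by
  rw [SimpleGraph.adj_comm, adj_inl_inr]

@[simp]
theorem not_adj_inr_inr {p q : Fin m × Fin k} :
    ¬ (cliquePendant m k).Adj (Sum.inr p) (Sum.inr q) := by
  simp [cliquePendant, cliquePendantRel]

theorem card_vertices : Fintype.card (Fin m ⊕ Fin m × Fin k) = m * (k + 1) := by
  simp only [Fintype.card_sum, Fintype.card_prod, Fintype.card_fin]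
  ring

theorem neighborFinset_inl (i : Fin m) :
    (cliquePendant m k).neighborFinset (Sum.inl i) =
      (Finset.univ.erase i).disjSum ({i} ×ˢ Finset.univ) := by
  ext (j | ⟨j, t⟩) <;> simp [eq_comm]

theorem neighborFinset_inr (p : Fin m × Fin k) :
    (cliquePendant m k).neighborFinset (Sum.inr p) = {Sum.inl p.1} := by
  ext (j | q) <;> simp [eq_comm]

theorem degree_inl (i : Fin (m + 1)) : (cliquePendant (m + 1) k).degree (Sum.inl i) = m + k := by
  rw [← SimpleGraph.card_neighborFinset_eq_degree, neighborFinset_inl, Finset.card_disjSum]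
  simp

theorem degree_inr (p : Fin m × Fin k) : (cliquePendant m k).degree (Sum.inr p) = 1 := by
  rw [← SimpleGraph.card_neighborFinset_eq_degree, neighborFinset_inr, Finset.card_singleton]

theorem maxDegree_eq : (cliquePendant (m + 1) k).maxDegree = m + k := by
  apply le_antisymm
  · refine SimpleGraph.maxDegree_le_of_forall_degree_le _ _ ?_
    rintro (i | p)
    · exact (degree_inl i).le
    · have hk : 0 < k := p.2.pos
      rw [degree_inr]
      omega
  · rw [← degree_inl (0 : Fin (m + 1))]
    exact SimpleGraph.degree_le_maxDegree _ _

theorem isClique_range_inl : (cliquePendant m k).IsClique (Set.range Sum.inl) := by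
  rintro _ ⟨i, rfl⟩ _ ⟨j, rfl⟩ hij
  exact adj_inl_inl.2 (ne_of_apply_ne Sum.inl hij)

theorem isVertexCover_range_inl : (cliquePendant m k).IsVertexCover (Set.range Sum.inl) := by
  rintro (i | p) (j | q) hadj
  · exact Or.inl ⟨i, rfl⟩
  · exact Or.inl ⟨i, rfl⟩
  · exact Or.inr ⟨j, rfl⟩
  · exact absurd hadj not_adj_inr_inr

theorem ne_bot (hm : 2 ≤ m) : cliquePendant m k ≠ ⊥ := by
  have := Fin.nontrivial_iff_two_le.2 hm
  obtain ⟨i, j, hij⟩ := exists_pair_ne (Fin m)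
  exact SimpleGraph.ne_bot_iff_exists_adj.2 ⟨Sum.inl i, Sum.inl j, adj_inl_inl.2 hij⟩

theorem indMatchNum_eq_one (hm : 2 ≤ m) : indMatchNum (cliquePendant m k) = 1 :=
  indMatchNum_eq_one_of_isClique_of_isVertexCover (ne_bot hm) isClique_range_inl
    isVertexCover_range_inl

end cliquePendant

/-- Sharpness example `H₁` for `Δ ≥ 3`: the graph obtained from the complete graph on
`⌈Δ/2⌉ + 1` vertices by attaching `⌊Δ/2⌋` pendant vertices to each of its vertices has
maximum degree `Δ`, induced matching number `1`, and `(⌈Δ/2⌉+1)(⌊Δ/2⌋+1)` vertices;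
in particular the bound `ν_s(G) ≥ n(G)/((⌈Δ/2⌉+1)(⌊Δ/2⌋+1))` holds with equality for it.
(Here `⌈Δ/2⌉ = (Δ+1)/2` and `⌊Δ/2⌋ = Δ/2` with natural-number division.) -/
theorem cliquePendant_sharpness_H1 (Δ : ℕ) (hΔ : 3 ≤ Δ) :
    (cliquePendant ((Δ + 1) / 2 + 1) (Δ / 2)).maxDegree = Δ ∧
    indMatchNum (cliquePendant ((Δ + 1) / 2 + 1) (Δ / 2)) = 1 ∧
    Fintype.card (Fin ((Δ + 1) / 2 + 1) ⊕ Fin ((Δ + 1) / 2 + 1) × Fin (Δ / 2))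
      = ((Δ + 1) / 2 + 1) * (Δ / 2 + 1) ∧
    (indMatchNum (cliquePendant ((Δ + 1) / 2 + 1) (Δ / 2)) : ℚ)
      = (Fintype.card (Fin ((Δ + 1) / 2 + 1) ⊕ Fin ((Δ + 1) / 2 + 1) × Fin (Δ / 2)) : ℚ) /
          (((((Δ + 1) / 2 : ℕ) : ℚ) + 1) * ((((Δ : ℕ) / 2 : ℕ) : ℚ) + 1)) := by
  have hnum : indMatchNum (cliquePendant ((Δ + 1) / 2 + 1) (Δ / 2)) = 1 :=
    cliquePendant.indMatchNum_eq_one (by omega)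
  refine ⟨?_, hnum, cliquePendant.card_vertices, ?_⟩
  · rw [cliquePendant.maxDegree_eq]
    omega
  · rw [hnum, cliquePendant.card_vertices]
    push_cast
    exact (div_self (by positivity)).symm
end
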